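/- Let p and q be positive integers and let π be a partition of [p+q] with exactly one (p,q)-connecting block B₀; write B₀' = B₀∩{1,...,p}, B₀'' = B₀∩{p+1,...,p+q}, let B₁',...,B_s' be the blocks of π contained in {1,...,p} and B₁'',...,B_t'' the blocks of π contained in {p+1,...,p+q}. Then π ∈ NC_ann(p,q) if and only if the partition {B₀', B₁', ..., B_s'} of {1,...,p} belongs to NC_disc({1,...,p}) and the partition {B₀'', B₁'', ..., B_t''} of {p+1,...,p+q} belongs to NC_disc({p+1,...,p+q}). -/

import Mathlib

/-- The permutation induced by `f` on the subset `B`: an element `b` is sent to the first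
element of the sequence `f b, f (f b), f (f (f b)), ...` that lies in `B`
(and is left fixed if no iterate ever returns to `B`). -/
noncomputable def induced {α : Type*} (f : α → α) (B : Set α) (b : α) : α := by
  classical
  exact if h : ∃ k, 0 < k ∧ f^[k] b ∈ B then f^[Nat.find h] b else b

/-- `A` is an orbit of the permutation `τ`. -/
def IsOrbit {α : Type*} (τ : Equiv.Perm α) (A : Set α) : Prop :=
  ∃ a, A = {b | τ.SameCycle a b}

/-- The number of orbits of `τ` (fixed points count as orbits). -/
noncomputable def numOrbits {α : Type*} (τ : Equiv.Perm α) : ℕ :=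
  Set.ncard {A : Set α | IsOrbit τ A}

/-- `induced f S` acts on `a, b, c` as the 3-cycle `(a, b, c)`. -/
def MapsCyc3 {α : Type*} (f : α → α) (S : Set α) (a b c : α) : Prop :=
  induced f S a = b ∧ induced f S b = c ∧ induced f S c = a

/-- `induced f S` acts on `a, b, c, d` as the 4-cycle `(a, b, c, d)`. -/
def MapsCyc4 {α : Type*} (f : α → α) (S : Set α) (a b c d : α) : Prop :=
  induced f S a = b ∧ induced f S b = c ∧ induced f S c = d ∧ induced f S d = a

/-- `induced f S` acts on `a, b, c, d` as the product of transpositions `(a, c)(b, d)`. -/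
def MapsSwap2 {α : Type*} (f : α → α) (S : Set α) (a b c d : α) : Prop :=
  induced f S a = c ∧ induced f S c = a ∧ induced f S b = d ∧ induced f S d = b

/-- `induced f S` acts on `x, y` as the transposition `(x, y)`. -/
def MapsSwap {α : Type*} (f : α → α) (S : Set α) (x y : α) : Prop :=
  induced f S x = y ∧ induced f S y = x

/-- `σ` is standard with respect to the "forward cycle" `γ₀`, i.e. `σ∣B = γ₀∣B` for
every orbit `B` of `σ`. -/
def DiscStandardRel {n : ℕ} (γ₀ σ : Equiv.Perm (Fin n)) : Prop :=
  ∀ A : Set (Fin n), IsOrbit σ A → ∀ b ∈ A, induced (⇑σ) A b = induced (⇑γ₀) A b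

/-- The orbit partition of `σ` has no crossing: there are no `a < b < c < d` with
`a, c` in one orbit and `b, d` in a different orbit. -/
def OrbitsNoCrossing {n : ℕ} (σ : Equiv.Perm (Fin n)) : Prop :=
  ¬ ∃ a b c d : Fin n, a < b ∧ b < c ∧ c < d ∧
      σ.SameCycle a c ∧ σ.SameCycle b d ∧ ¬ σ.SameCycle a b

/-- Disc non-crossing relative to a given forward cycle `γ₀`. -/
def DiscNCRel {n : ℕ} (γ₀ σ : Equiv.Perm (Fin n)) : Prop :=
  DiscStandardRel γ₀ σ ∧ OrbitsNoCrossing σ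

/-- The set `S_disc-nc(n)` of disc non-crossing permutations of `[n]`
(here `[n] = {1, …, n}` is modelled by `Fin n`, and the forward cycle
`γ₀ = (1, 2, …, n)` is `finRotate n`). -/
def DiscNC {n : ℕ} (σ : Equiv.Perm (Fin n)) : Prop :=
  DiscNCRel (finRotate n) σ

/-- The external points `{1, …, p}` (0-indexed: values `< p`). -/
def extSet (p q : ℕ) : Set (Fin (p + q)) := {i | (i : ℕ) < p}

/-- The internal points `{p+1, …, p+q}` (0-indexed: values `≥ p`). -/
def intSet (p q : ℕ) : Set (Fin (p + q)) := {i | p ≤ (i : ℕ)}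

/-- `γ_ext = (1, 2, …, p)`, the forward cycle on the external points. -/
def gammaExt (p q : ℕ) : Equiv.Perm (Fin (p + q)) :=
  ((List.finRange (p + q)).take p).formPerm

/-- `γ_int = (p+1, p+2, …, p+q)`, the forward cycle on the internal points. -/
def gammaInt (p q : ℕ) : Equiv.Perm (Fin (p + q)) :=
  ((List.finRange (p + q)).drop p).formPerm

/-- `γ = γ_ext · γ_int`. -/
def gammaAnn (p q : ℕ) : Equiv.Perm (Fin (p + q)) := gammaExt p q * gammaInt p q

/-- `λ_{x,y}`: the permutation fixing `x` and `y` and cycling the remaining points as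
`(γ_ext(x), γ_ext²(x), …, γ_ext^{p-1}(x), γ_int(y), γ_int²(y), …, γ_int^{q-1}(y))`. -/
def lamPerm (p q : ℕ) (x y : Fin (p + q)) : Equiv.Perm (Fin (p + q)) :=
  (((List.range (p - 1)).map fun k => (gammaExt p q ^ (k + 1)) x) ++
    ((List.range (q - 1)).map fun k => (gammaInt p q ^ (k + 1)) y)).formPerm

/-- `τ` is standard in `(p,q)`-annular sense. -/
def AnnStandard (p q : ℕ) (τ : Equiv.Perm (Fin (p + q))) : Prop :=
  (∀ A : Set (Fin (p + q)), IsOrbit τ A →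
    (∀ b ∈ A ∩ extSet p q,
        induced (⇑τ) (A ∩ extSet p q) b = induced (⇑(gammaExt p q)) (A ∩ extSet p q) b) ∧
    (∀ b ∈ A ∩ intSet p q,
        induced (⇑τ) (A ∩ intSet p q) b = induced (⇑(gammaInt p q)) (A ∩ intSet p q) b)) ∧
  (∀ A : Set (Fin (p + q)), IsOrbit τ A →
    (A ∩ extSet p q).Nonempty → (A ∩ intSet p q).Nonempty →
    (∃! a, a ∈ A ∩ extSet p q ∧ τ a ∈ intSet p q) ∧
    (∃! a, a ∈ A ∩ intSet p q ∧ τ a ∈ extSet p q))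

/-- The annular crossing pattern (AC-1). -/
def AC1 (p q : ℕ) (τ : Equiv.Perm (Fin (p + q))) : Prop :=
  ∃ a b c d : Fin (p + q), List.Pairwise (· ≠ ·) [a, b, c, d] ∧
    MapsCyc4 (⇑(gammaAnn p q)) {a, b, c, d} a b c d ∧
    MapsSwap2 (⇑τ) {a, b, c, d} a b c d

/-- The annular crossing pattern (AC-2). -/
def AC2 (p q : ℕ) (τ : Equiv.Perm (Fin (p + q))) : Prop :=
  ∃ a b c x y : Fin (p + q), List.Pairwise (· ≠ ·) [a, b, c, x, y] ∧
    x ∈ extSet p q ∧ y ∈ intSet p q ∧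
    MapsCyc3 (⇑(lamPerm p q x y)) {a, b, c} a b c ∧
    MapsCyc3 (⇑τ) {a, b, c, x, y} a c b ∧
    MapsSwap (⇑τ) {a, b, c, x, y} x y

/-- The annular crossing pattern (AC-3). -/
def AC3 (p q : ℕ) (τ : Equiv.Perm (Fin (p + q))) : Prop :=
  ∃ a b c d x y : Fin (p + q), List.Pairwise (· ≠ ·) [a, b, c, d, x, y] ∧
    x ∈ extSet p q ∧ y ∈ intSet p q ∧
    MapsCyc4 (⇑(lamPerm p q x y)) {a, b, c, d} a b c d ∧
    MapsSwap2 (⇑τ) {a, b, c, d, x, y} a b c d ∧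
    MapsSwap (⇑τ) {a, b, c, d, x, y} x y

/-- The set `S_ann-nc(p,q)` of `(p,q)`-annular non-crossing permutations. -/
def AnnNC (p q : ℕ) (τ : Equiv.Perm (Fin (p + q))) : Prop :=
  AnnStandard p q τ ∧ ¬ AC1 p q τ ∧ ¬ AC2 p q τ ∧ ¬ AC3 p q τ

/-- A `(p,q)`-connecting set: meets both the external and internal points. -/
def ConnectingBlock (p q : ℕ) (B : Set (Fin (p + q))) : Prop :=
  (B ∩ extSet p q).Nonempty ∧ (B ∩ intSet p q).Nonempty

/-- `τ` is `(p,q)`-connected: it has a `(p,q)`-connecting orbit. -/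
def AnnConnected (p q : ℕ) (τ : Equiv.Perm (Fin (p + q))) : Prop :=
  ∃ A : Set (Fin (p + q)), IsOrbit τ A ∧ ConnectingBlock p q A

/-- A family of blocks has no crossing: no `a < b < c < d` with `a, c` in one block and
`b, d` in a different block. -/
def NoCrossing {n : ℕ} (ρ : Set (Set (Fin n))) : Prop :=
  ¬ ∃ (a b c d : Fin n) (B C : Set (Fin n)), B ∈ ρ ∧ C ∈ ρ ∧ B ≠ C ∧
      a < b ∧ b < c ∧ c < d ∧ a ∈ B ∧ c ∈ B ∧ b ∈ C ∧ d ∈ C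

/-!
The cycle `(1, …, p+q)` follows `γ` along each circle except for one passage from each circle to
the other. Inducing it on every block of `π` therefore gives a permutation that is standard in the
annular sense and has the blocks as its orbits. A pattern (AC-1) is exactly a crossing of two orbits
inside one circle, which accounts for the two disc conditions.

When at most one orbit connects the circles, (AC-2) and (AC-3) add nothing. Both contain an orbit
through `x` and `y`, so all other orbits in the pattern stay on one circle. Restricted to a subset
of one circle avoiding `x` and `y`, `λ_{x,y}` agrees with `γ`. Hence (AC-2) contradicts
standardness, and (AC-3) is an instance of (AC-1) unless its two orbits lie on different circles;
but then `λ_{x,y}` would leave the same circle at two different points.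
-/

section FirstVisit

variable {α : Type*}

/-- `FirstVisit f S b c` says that `c` is the first point of `f b, f (f b), …` lying in `S`; it is
the relational form of `induced f S b = c`, without the default value of `induced`. -/
inductive FirstVisit (f : α → α) (S : Set α) : α → α → Prop
  | here {b : α} : f b ∈ S → FirstVisit f S b (f b)
  | step {b c : α} : f b ∉ S → FirstVisit f S (f b) c → FirstVisit f S b c

namespace FirstVisit

variable {f g : α → α} {S T : Set α} {b c : α}

theorem mem (h : FirstVisit f S b c) : c ∈ S := by
  induction h with
  | here hb => exact hb
  | step _ _ ih => exact ih

theorem exists_iterate (h : FirstVisit f S b c) :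
    ∃ k, f^[k + 1] b = c ∧ ∀ j < k, f^[j + 1] b ∉ S := by
  induction h with
  | here => exact ⟨0, rfl, by simp⟩
  | step hb _ ih =>
    obtain ⟨k, hk, hmin⟩ := ih
    refine ⟨k + 1, hk, fun j hj => ?_⟩
    cases j with
    | zero => exact hb
    | succ j => exact hmin j (by lia)

theorem induced_eq (h : FirstVisit f S b c) : induced f S b = c := by
  classical
  obtain ⟨k, rfl, hmin⟩ := h.exists_iterate
  have hex : ∃ k, 0 < k ∧ f^[k] b ∈ S := ⟨k + 1, k.succ_pos, h.mem⟩
  have hfind : Nat.find hex = k + 1 := by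
    refine (Nat.find_eq_iff hex).2 ⟨⟨k.succ_pos, h.mem⟩, fun j hj hjS => ?_⟩
    obtain ⟨i, rfl⟩ := Nat.exists_eq_succ_of_ne_zero hjS.1.ne'
    exact hmin i (by lia) hjS.2
  rw [induced, dif_pos hex, hfind]

theorem exists_of_iterate_mem {k : ℕ} (h : f^[k + 1] b ∈ S) : ∃ c, FirstVisit f S b c := by
  induction k generalizing b with
  | zero => exact ⟨f b, here h⟩
  | succ k ih =>
    by_cases hb : f b ∈ S
    · exact ⟨f b, here hb⟩
    · obtain ⟨c, hc⟩ := ih h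
      exact ⟨c, step hb hc⟩

theorem congr {A : Set α} (h : FirstVisit f S b c) (hfg : Set.EqOn f g A) (hA : Set.MapsTo f A A)
    (hb : b ∈ A) : FirstVisit g S b c := by
  induction h with
  | here hbS => exact hfg hb ▸ here (hfg hb ▸ hbS)
  | step hbS _ ih => exact step (hfg hb ▸ hbS) (hfg hb ▸ ih (hA hb))

theorem exists_superset (hTS : T ⊆ S) (h : FirstVisit f T b c) : ∃ d, FirstVisit f S b d := by
  obtain ⟨k, hk, -⟩ := h.exists_iterate
  exact exists_of_iterate_mem (hk ▸ hTS h.mem)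

theorem of_apply_eq {b' : α} (hbb' : f b = f b') (h : FirstVisit f S b c) :
    FirstVisit f S b' c := by
  cases h with
  | here hb => exact hbb' ▸ here (hbb' ▸ hb)
  | step hb h => exact step (hbb' ▸ hb) (hbb' ▸ h)

theorem induced_superset (hTS : T ⊆ S) (h : FirstVisit f T b c) :
    FirstVisit (induced f S) T b c := by
  induction h with
  | @here b hb =>
    have hfb : induced f S b = f b := (here (hTS hb)).induced_eq
    exact hfb ▸ here (hfb ▸ hb)
  | @step b c hb hbc ih =>
    by_cases hbS : f b ∈ S
    · have hfb : induced f S b = f b := (here hbS).induced_eq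
      exact step (hfb ▸ hb) (hfb ▸ ih)
    · obtain ⟨d, hd⟩ := hbc.exists_superset hTS
      exact ih.of_apply_eq (hd.induced_eq.trans (step hbS hd).induced_eq.symm)

theorem of_isChain {l : List α}
    (h : List.IsChain (fun u v => f u = v) (b :: l ++ [c])) (hl : ∀ z ∈ l, z ∉ S) (hc : c ∈ S) :
    FirstVisit f S b c := by
  induction l generalizing b with
  | nil =>
    obtain rfl : f b = c := by simpa using h
    exact here hc
  | cons z l ih =>
    obtain ⟨rfl, h⟩ := List.isChain_cons_cons.1 h
    exact step (hl _ List.mem_cons_self) (ih h fun w hw => hl w (List.mem_cons_of_mem _ hw))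

end FirstVisit

end FirstVisit

section Induced

variable {α : Type*} {f g : α → α} {S T : Set α} {a b : α}

theorem induced_of_mem (h : f b ∈ S) : induced f S b = f b :=
  (FirstVisit.here h).induced_eq

theorem induced_mem_of_mapsTo {A : Set α} (hA : Set.MapsTo f A A) (hb : b ∈ A) :
    induced f S b ∈ A := by
  classical
  rw [induced]
  split_ifs
  · exact hA.iterate _ hb
  · exact hb

theorem exists_iterate_induced_eq_iterate {n : ℕ} (h : f^[n + 1] a ∈ S) :
    ∃ k, (induced f S)^[k] a = f^[n + 1] a := by
  suffices ∃ k, (induced f S)^[k + 1] a = f^[n + 1] a from this.imp' (· + 1) fun _ hk => hk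
  induction n generalizing a with
  | zero => exact ⟨0, induced_of_mem h⟩
  | succ n ih =>
    obtain ⟨k, hk⟩ := ih h
    rw [Function.iterate_succ_apply f, ← hk]
    by_cases ha : f a ∈ S
    · exact ⟨k + 1, by rw [Function.iterate_succ_apply _ (k + 1), induced_of_mem ha]⟩
    · obtain ⟨c, hc⟩ := FirstVisit.exists_of_iterate_mem (b := f a) h
      refine ⟨k, ?_⟩
      rw [Function.iterate_succ_apply, Function.iterate_succ_apply _ k (f a), hc.induced_eq,
        (FirstVisit.step ha hc).induced_eq]

theorem sameCycle_induced (σ : Equiv.Perm α) (b : α) : σ.SameCycle b (induced σ S b) :=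
  induced_mem_of_mapsTo (A := {c | σ.SameCycle b c})
    (fun _ hc => Equiv.Perm.sameCycle_apply_right.2 hc) (Equiv.Perm.SameCycle.refl σ b)

section Perm

variable [Finite α] {σ : Equiv.Perm α}

theorem exists_iterate_succ_eq (hab : σ.SameCycle a b) : ∃ k, σ^[k + 1] a = b := by
  obtain ⟨n, hn, -, hnb⟩ := hab.exists_pow_eq''
  exact ⟨n - 1, by rw [Nat.sub_add_cancel hn, Equiv.Perm.iterate_eq_pow, hnb]⟩

variable (σ)

theorem firstVisit_induced (hb : b ∈ S) : FirstVisit σ S b (induced σ S b) := by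
  obtain ⟨k, hk⟩ := exists_iterate_succ_eq (Equiv.Perm.SameCycle.refl σ b)
  obtain ⟨c, hc⟩ := FirstVisit.exists_of_iterate_mem (hk ▸ hb)
  exact hc.induced_eq ▸ hc

theorem induced_mem (hb : b ∈ S) : induced σ S b ∈ S :=
  (firstVisit_induced σ hb).mem

theorem induced_induced (hTS : T ⊆ S) (hb : b ∈ T) :
    induced (induced σ S) T b = induced σ T b :=
  ((firstVisit_induced σ hb).induced_superset hTS).induced_eq

theorem induced_eq_of_induced_mem (hTS : T ⊆ S) (hb : b ∈ T) (h : induced σ S b ∈ T) :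
    induced σ T b = induced σ S b := by
  rw [← induced_induced σ hTS hb, induced_of_mem h]

theorem induced_congr {A : Set α} (hσg : Set.EqOn σ g A) (hA : Set.MapsTo σ A A)
    (hbA : b ∈ A) (hbS : b ∈ S) : induced g S b = induced σ S b :=
  ((firstVisit_induced σ hbS).congr hσg hA hbA).induced_eq

theorem eqOn_induced_of_subset {ρ : Equiv.Perm α} (hTS : T ⊆ S)
    (h : Set.EqOn (induced σ S) (induced ρ S) S) : Set.EqOn (induced σ T) (induced ρ T) T := by
  intro b hb
  have hvisit := ((firstVisit_induced σ hb).induced_superset hTS).congr h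
    (fun _ hz => induced_mem σ hz) (hTS hb)
  rw [← hvisit.induced_eq, induced_induced ρ hTS hb]

theorem exists_iterate_induced_eq (hb : b ∈ S) (hab : σ.SameCycle a b) :
    ∃ k, (induced σ S)^[k] a = b := by
  obtain ⟨n, rfl⟩ := exists_iterate_succ_eq hab
  exact exists_iterate_induced_eq_iterate hb

end Perm

end Induced

section FormPerm

variable {α : Type*} [DecidableEq α]

theorem isChain_formPerm {b : α} {l : List α} (h : (b :: l).Nodup) :
    List.IsChain (fun u v => (b :: l).formPerm u = v) (b :: l ++ [b]) := by
  refine List.isChain_append.2 ⟨List.isChain_iff_getElem.2 fun i hi =>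
    List.formPerm_apply_lt_getElem _ h i hi, List.isChain_singleton _, ?_⟩
  simp only [List.getLast?_eq_some_getLast (List.cons_ne_nil b l), List.head?_cons,
    Option.mem_some_iff, forall_eq', List.formPerm_apply_getLast]

theorem isRotated_cons_map_formPerm_pow {L : List α}
    (hL : L.Nodup) {x : α} (hx : x ∈ L) :
    L ~r (x :: (List.range (L.length - 1)).map fun k => (L.formPerm ^ (k + 1)) x) := by
  obtain ⟨l, m, rfl⟩ := List.append_of_mem hx
  have hrot : (l ++ x :: m) ~r (x :: (m ++ l)) := List.isRotated_append
  convert! hrot using 2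
  refine List.ext_getElem (by simp; lia) fun k hk hk' => ?_
  rw [List.getElem_map, List.getElem_range, List.formPerm_eq_of_isRotated hL hrot,
    List.formPerm_pow_apply_head _ _ (hrot.nodup_iff.1 hL)]
  simp only [Nat.mod_eq_of_lt (Nat.succ_lt_succ hk'), List.length_cons, List.getElem_cons_succ]

variable {S : Set α}

theorem induced_formPerm_head [DecidablePred (· ∈ S)] {b : α} {l : List α}
    (h : (b :: l).Nodup) (hb : b ∈ S) :
    induced (b :: l).formPerm S b = (b :: l.filter (· ∈ S)).formPerm b := by
  have hchain := isChain_formPerm h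
  rcases hl : l.filter (· ∈ S) with _ | ⟨c, r⟩
  · have hlS : ∀ z ∈ l, z ∉ S := by simpa [List.filter_eq_nil_iff] using hl
    rw [(FirstVisit.of_isChain hchain hlS hb).induced_eq, List.formPerm_singleton,
      Equiv.Perm.one_apply]
  · have hnodup : (b :: c :: r).Nodup := hl ▸ h.sublist (List.filter_sublist.cons_cons b)
    obtain ⟨l₁, l₂, rfl, hl₁, hc, -⟩ := List.filter_eq_cons_iff.1 hl
    rw [List.formPerm_apply_head _ _ _ hnodup]
    refine (FirstVisit.of_isChain (l := l₁) (hchain.prefix ⟨l₂ ++ [b], by simp⟩) ?_ ?_).induced_eq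
    · simpa using hl₁
    · simpa using hc

theorem induced_formPerm [DecidablePred (· ∈ S)] {L : List α} (hL : L.Nodup) {b : α}
    (hb : b ∈ S) :
    induced L.formPerm S b = (L.filter (· ∈ S)).formPerm b := by
  by_cases hbL : b ∈ L
  · obtain ⟨l, m, rfl⟩ := List.append_of_mem hbL
    have hrot : (l ++ b :: m) ~r (b :: (m ++ l)) := List.isRotated_append
    have hrotS : ((l ++ b :: m).filter (· ∈ S)) ~r (b :: (m ++ l).filter (· ∈ S)) := by
      rw [List.filter_append, List.filter_cons_of_pos (by simpa using hb), List.filter_append]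
      exact List.isRotated_append
    rw [List.formPerm_eq_of_isRotated hL hrot,
      List.formPerm_eq_of_isRotated (hL.filter _) hrotS,
      induced_formPerm_head (hrot.nodup_iff.1 hL) hb]
  · have hfix : L.formPerm b = b := List.formPerm_apply_of_notMem hbL
    rw [induced_of_mem (hfix.symm ▸ hb), hfix,
      List.formPerm_apply_of_notMem fun h => hbL (List.mem_of_mem_filter h)]

theorem induced_formPerm_append_left {l m : List α} (h : (l ++ m).Nodup) (hm : ∀ z ∈ m, z ∉ S)
    {b : α} (hb : b ∈ S) : induced (l ++ m).formPerm S b = induced l.formPerm S b := by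
  classical
  have hnil : m.filter (· ∈ S) = [] := by simpa [List.filter_eq_nil_iff] using hm
  rw [induced_formPerm h hb, induced_formPerm h.of_append_left hb, List.filter_append, hnil,
    List.append_nil]

theorem induced_formPerm_append_right {l m : List α} (h : (l ++ m).Nodup) (hl : ∀ z ∈ l, z ∉ S)
    {b : α} (hb : b ∈ S) : induced (l ++ m).formPerm S b = induced m.formPerm S b := by
  rw [List.formPerm_eq_of_isRotated h List.isRotated_append]
  exact induced_formPerm_append_left (List.nodup_append_comm.1 h) hl hb

theorem existsUnique_mem_formPerm_append_mem {l m : List α} (h : (l ++ m).Nodup) (hl : l ≠ [])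
    (hm : m ≠ []) : ∃! z, z ∈ l ∧ (l ++ m).formPerm z ∈ m := by
  have hl' := List.length_pos_iff.2 hl
  have hm' := List.length_pos_iff.2 hm
  have hexit (i : ℕ) (hi : i < l.length) : (l ++ m).formPerm l[i] ∈ m ↔ i + 1 = l.length := by
    have hnext := List.formPerm_apply_lt_getElem _ h i (by simp; lia)
    rw [List.getElem_append_left hi, List.getElem_append] at hnext
    rw [hnext]
    split_ifs with hi'
    · exact iff_of_false (List.disjoint_of_nodup_append h (List.getElem_mem hi')) hi'.ne
    · exact iff_of_true (List.getElem_mem _) (by lia)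
  refine ⟨l[l.length - 1], ⟨List.getElem_mem _, (hexit _ (by lia)).2 (by lia)⟩, ?_⟩
  rintro _ ⟨hz, hzm⟩
  obtain ⟨i, hi, rfl⟩ := List.getElem_of_mem hz
  have := (hexit i hi).1 hzm
  simp only [← this, Nat.add_sub_cancel]

theorem existsUnique_induced_formPerm_append_mem {L M : List α} (h : (L ++ M).Nodup)
    (hL : ∃ z ∈ L, z ∈ S) (hM : ∃ z ∈ M, z ∈ S) :
    ∃! z, (z ∈ S ∧ z ∈ L) ∧ induced (L ++ M).formPerm S z ∈ M := by
  classical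
  have hne : ∀ {N : List α}, (∃ z ∈ N, z ∈ S) → N.filter (· ∈ S) ≠ [] := by
    rintro N ⟨z, hzN, hzS⟩ hnil
    exact List.not_mem_nil (hnil ▸ List.mem_filter.2 ⟨hzN, decide_eq_true hzS⟩)
  have hnodup := h.filter (· ∈ S)
  rw [List.filter_append] at hnodup
  refine (existsUnique_congr fun z => ?_).1
    (existsUnique_mem_formPerm_append_mem hnodup (hne hL) (hne hM))
  rw [List.mem_filter, decide_eq_true_iff, and_comm (a := z ∈ L)]
  refine and_congr_right fun hz => ?_
  have hmem : ((L ++ M).filter (· ∈ S)).formPerm z ∈ (L ++ M).filter (· ∈ S) :=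
    List.formPerm_apply_mem_of_mem <|
      List.mem_filter.2 ⟨List.mem_append_left _ hz.2, decide_eq_true hz.1⟩
  rw [induced_formPerm h hz.1, ← List.filter_append, List.mem_filter,
    and_iff_left (List.mem_filter.1 hmem).2]

end FormPerm

section Crossing

variable {α : Type*} {s : Setoid α} {a b c d : α}

/-- The points `a, b, c, d`, read in this cyclic order, witness that two classes of `s` cross. -/
def Crosses (s : Setoid α) (a b c d : α) : Prop :=
  s a c ∧ s b d ∧ ¬ s a b

/-- Two classes of `s` cross inside the linearly ordered set `E`. -/
def HasCrossing [LT α] (s : Setoid α) (E : Set α) : Prop :=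
  ∃ a b c d, a ∈ E ∧ b ∈ E ∧ c ∈ E ∧ d ∈ E ∧ a < b ∧ b < c ∧ c < d ∧ Crosses s a b c d

theorem Crosses.rotate (h : Crosses s a b c d) : Crosses s b c d a :=
  ⟨h.2.1, s.symm h.1, fun hbc => h.2.2 (s.trans h.1 (s.symm hbc))⟩

theorem HasCrossing.of_pairwise_lt [LT α] {E : Set α} (hlt : [a, b, c, d].Pairwise (· < ·))
    (hE : ∀ z ∈ [a, b, c, d], z ∈ E) (hs : Crosses s a b c d) : HasCrossing s E :=
  ⟨a, b, c, d, hE a (by simp), hE b (by simp), hE c (by simp), hE d (by simp), by grind⟩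

theorem induced_eq_of_forall_sameCycle [Finite α] {σ : Equiv.Perm α} {S : Set α} (ha : a ∈ S)
    (hb : b ∈ S) (hab : σ.SameCycle a b) (hne : a ≠ b)
    (h : ∀ z ∈ S, σ.SameCycle a z → z = a ∨ z = b) : induced σ S a = b := by
  refine (h _ (induced_mem σ ha) (sameCycle_induced σ a)).resolve_left fun hfix => hne ?_
  obtain ⟨k, rfl⟩ := exists_iterate_induced_eq σ hb hab
  exact (Function.iterate_fixed hfix k).symm

theorem not_sameCycle_of_mapsTo_induced [Finite α] {σ : Equiv.Perm α} {S A : Set α}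
    (hA : Set.MapsTo (induced σ S) A A) (ha : a ∈ A) (hb : b ∈ S) (hbA : b ∉ A) :
    ¬ σ.SameCycle a b := by
  intro hab
  obtain ⟨k, rfl⟩ := exists_iterate_induced_eq σ hb hab
  exact hbA (hA.iterate k ha)

theorem MapsSwap.not_sameCycle [Finite α] {σ : Equiv.Perm α} {S : Set α} {x y z : α}
    (h : MapsSwap σ S x y) (hz : z ∈ S) (hzx : z ≠ x) (hzy : z ≠ y) : ¬ σ.SameCycle x z := by
  have hmaps : Set.MapsTo (induced σ S) {x, y} {x, y} := by
    rintro _ (rfl | rfl) <;> simp [h.1, h.2]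
  exact not_sameCycle_of_mapsTo_induced hmaps (by simp) hz (by simp [hzx, hzy])

theorem MapsSwap2.of_superset [Finite α] {σ : Equiv.Perm α} {S T : Set α} (hTS : T ⊆ S)
    (h : MapsSwap2 σ S a b c d) (hT : ∀ z ∈ [a, b, c, d], z ∈ T) : MapsSwap2 σ T a b c d := by
  have hind {z w} (hz : z ∈ [a, b, c, d]) (hw : w ∈ [a, b, c, d]) (hzw : induced σ S z = w) :
      induced σ T z = w :=
    (induced_eq_of_induced_mem σ hTS (hT z hz) (hzw ▸ hT w hw)).trans hzw
  exact ⟨hind (by simp) (by simp) h.1, hind (by simp) (by simp) h.2.1,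
    hind (by simp) (by simp) h.2.2.1, hind (by simp) (by simp) h.2.2.2⟩

theorem mapsSwap2_iff_crosses [Finite α] {σ : Equiv.Perm α} (h : [a, b, c, d].Nodup) :
    MapsSwap2 σ {a, b, c, d} a b c d ↔ Crosses (Equiv.Perm.SameCycle.setoid σ) a b c d := by
  have hac : a ≠ c := by grind
  have hbd : b ≠ d := by grind
  constructor
  · rintro ⟨ha, hc, hb, -⟩
    exact ⟨ha ▸ sameCycle_induced σ a, hb ▸ sameCycle_induced σ b,
      MapsSwap.not_sameCycle ⟨ha, hc⟩ (by simp) (by grind) (by grind)⟩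
  · rintro ⟨hca : σ.SameCycle a c, hdb : σ.SameCycle b d, hab : ¬ σ.SameCycle a b⟩
    refine ⟨induced_eq_of_forall_sameCycle (by simp) (by simp) hca hac ?_,
      induced_eq_of_forall_sameCycle (by simp) (by simp) hca.symm hac.symm ?_,
      induced_eq_of_forall_sameCycle (by simp) (by simp) hdb hbd ?_,
      induced_eq_of_forall_sameCycle (by simp) (by simp) hdb.symm hbd.symm ?_⟩ <;>
    grind [Equiv.Perm.SameCycle.symm, Equiv.Perm.SameCycle.trans]

theorem mapsCyc4_formPerm_iff_isRotated [DecidableEq α] {L : List α} (hL : L.Nodup)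
    (h : [a, b, c, d].Nodup) :
    MapsCyc4 L.formPerm {a, b, c, d} a b c d ↔
      L.filter (· ∈ ({a, b, c, d} : Set α)) ~r [a, b, c, d] := by
  obtain ⟨hab, hbc, hcd, hda⟩ : [a, b, c, d].formPerm a = b ∧ [a, b, c, d].formPerm b = c ∧
      [a, b, c, d].formPerm c = d ∧ [a, b, c, d].formPerm d = a := by
    simpa using isChain_formPerm h
  have hind {z : α} (hz : z ∈ ({a, b, c, d} : Set α)) := induced_formPerm hL hz
  constructor
  · rintro ⟨ha, hb, hc, hd⟩
    refine ((List.formPerm_eq_formPerm_iff (hL.filter _) h).1 (Equiv.ext fun z => ?_)).resolve_right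
      (by simp)
    by_cases hz : z ∈ ({a, b, c, d} : Set α)
    · rw [← hind hz]
      obtain rfl | rfl | rfl | rfl := hz
      exacts [ha.trans hab.symm, hb.trans hbc.symm, hc.trans hcd.symm, hd.trans hda.symm]
    · rw [List.formPerm_apply_of_notMem fun h => hz (by simpa using List.of_mem_filter h),
        List.formPerm_apply_of_notMem (by simpa using hz)]
  · intro hrot
    have heq := List.formPerm_eq_of_isRotated (hL.filter _) hrot
    refine ⟨?_, ?_, ?_, ?_⟩ <;> rw [hind (by simp), heq] <;> assumption

theorem exists_mapsCyc4_formPerm_crosses_iff [LinearOrder α] {L : List α}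
    (hL : L.Pairwise (· < ·)) :
    (∃ a b c d, [a, b, c, d].Nodup ∧ (∀ z ∈ [a, b, c, d], z ∈ L) ∧
      MapsCyc4 L.formPerm {a, b, c, d} a b c d ∧ Crosses s a b c d) ↔
      HasCrossing s {z | z ∈ L} := by
  have hLnd : L.Nodup := hL.imp ne_of_lt
  constructor
  · rintro ⟨a, b, c, d, hnd, -, hcyc, hs⟩
    rw [mapsCyc4_formPerm_iff_isRotated hLnd hnd, ← List.mem_cyclicPermutations_iff] at hcyc
    have hcross {a' b' c' d' : α} (hs : Crosses s a' b' c' d')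
        (hfilter : L.filter (· ∈ ({a, b, c, d} : Set α)) = [a', b', c', d']) :
        HasCrossing s {z | z ∈ L} :=
      .of_pairwise_lt (hfilter ▸ hL.filter _)
        (fun z hz => List.mem_of_mem_filter (hfilter ▸ hz)) hs
    have hrot : L.filter (· ∈ ({a, b, c, d} : Set α)) = [a, b, c, d] ∨
        L.filter (· ∈ ({a, b, c, d} : Set α)) = [b, c, d, a] ∨
        L.filter (· ∈ ({a, b, c, d} : Set α)) = [c, d, a, b] ∨
        L.filter (· ∈ ({a, b, c, d} : Set α)) = [d, a, b, c] := by
      simpa [List.cyclicPermutations] using hcyc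
    obtain hf | hf | hf | hf := hrot
    exacts [hcross hs hf, hcross hs.rotate hf, hcross hs.rotate.rotate hf,
      hcross hs.rotate.rotate.rotate hf]
  · rintro ⟨a, b, c, d, ha, hb, hc, hd, hab, hbc, hcd, hs⟩
    have hlt : [a, b, c, d].Pairwise (· < ·) := by grind
    have hnd : [a, b, c, d].Nodup := hlt.imp ne_of_lt
    have hmem : ∀ z ∈ [a, b, c, d], z ∈ L := by grind
    refine ⟨a, b, c, d, hnd, hmem, (mapsCyc4_formPerm_iff_isRotated hLnd hnd).2 ?_, hs⟩
    have hperm : (L.filter (· ∈ ({a, b, c, d} : Set α))).Perm [a, b, c, d] :=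
      (List.perm_ext_iff_of_nodup (hLnd.filter _) hnd).2 fun z => by
        simp only [List.mem_filter]
        grind
    rw [hperm.eq_of_pairwise' (hL.filter _) hlt]

end Crossing

section ClasswiseInduced

variable {α : Type*}

theorem setOf_rel_eq {s : Setoid α} {i j : α} (h : s i j) : {z | s i z} = {z | s j z} :=
  Set.ext fun _ => ⟨s.trans (s.symm h), s.trans h⟩

variable [Finite α] (σ : Equiv.Perm α) (s : Setoid α)

theorem surjective_induced_class :
    Function.Surjective fun i => induced σ {j | s i j} i := by
  intro c
  have hmaps : Set.MapsTo (induced σ {j | s c j}) {j | s c j} {j | s c j} :=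
    fun _ hz => induced_mem σ hz
  obtain ⟨k, hk⟩ := exists_iterate_induced_eq σ (S := {j | s c j}) (s.refl c)
    (sameCycle_induced σ c).symm
  rw [← Function.iterate_succ_apply, Function.iterate_succ_apply'] at hk
  have hi : s c ((induced σ {j | s c j})^[k] c) := hmaps.iterate k (s.refl c)
  exact ⟨_, by beta_reduce; rw [← setOf_rel_eq hi, hk]⟩

/-- The permutation that restricts, on each class of `s`, to the permutation induced by `σ`. -/
noncomputable def classwiseInduced : Equiv.Perm α :=
  .ofBijective _ (Finite.surjective_iff_bijective.1 (surjective_induced_class σ s))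

variable {s}

theorem classwiseInduced_apply {i j : α} (h : s i j) :
    classwiseInduced σ s j = induced σ {z | s i z} j := by
  rw [classwiseInduced, Equiv.ofBijective_apply, setOf_rel_eq h]

theorem mapsTo_classwiseInduced (i : α) :
    Set.MapsTo (classwiseInduced σ s) {z | s i z} {z | s i z} := fun z hz => by
  rw [classwiseInduced_apply σ hz]
  exact induced_mem σ hz

theorem induced_classwiseInduced {T : Set α} {b : α} (hT : ∀ z ∈ T, s b z) (hb : b ∈ T) :
    induced (classwiseInduced σ s) T b = induced σ T b := by
  rw [← induced_induced σ hT hb]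
  exact (induced_congr _ (fun _ hz => classwiseInduced_apply σ hz)
    (mapsTo_classwiseInduced σ b) (s.refl b) hb).symm

variable {σ}

theorem sameCycle_classwiseInduced_iff (h : ∀ i j, s i j → σ.SameCycle i j) {i j : α} :
    (classwiseInduced σ s).SameCycle i j ↔ s i j := by
  refine ⟨fun hij => ?_, fun hij => ?_⟩
  · obtain ⟨k, rfl⟩ := exists_iterate_succ_eq hij
    exact (mapsTo_classwiseInduced σ i).iterate (k + 1) (s.refl i)
  · have hmaps : Set.MapsTo (induced σ {z | s i z})
        {z | s i z ∧ (classwiseInduced σ s).SameCycle i z}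
        {z | s i z ∧ (classwiseInduced σ s).SameCycle i z} := fun z hz =>
      ⟨induced_mem σ hz.1, by
        rw [← classwiseInduced_apply σ hz.1]
        exact Equiv.Perm.sameCycle_apply_right.2 hz.2⟩
    obtain ⟨k, rfl⟩ := exists_iterate_induced_eq σ (S := {z | s i z}) hij (h i j hij)
    exact (hmaps.iterate k ⟨s.refl i, .refl _ i⟩).2

end ClasswiseInduced

section Annulus

variable {p q : ℕ}

/-- The external points, in increasing order. -/
def extList (p q : ℕ) : List (Fin (p + q)) := (List.finRange (p + q)).take p

/-- The internal points, in increasing order. -/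
def intList (p q : ℕ) : List (Fin (p + q)) := (List.finRange (p + q)).drop p

/-- `L` lists, in increasing order, the points on one of the two circles of the annulus; the
two circles play the same role in most arguments. -/
def IsCircle (p q : ℕ) (L : List (Fin (p + q))) : Prop := L = extList p q ∨ L = intList p q

theorem gammaExt_eq : gammaExt p q = (extList p q).formPerm := rfl

theorem gammaInt_eq : gammaInt p q = (intList p q).formPerm := rfl

theorem notMem_extSet {z : Fin (p + q)} : z ∉ extSet p q ↔ z ∈ intSet p q := Nat.not_lt

theorem notMem_intSet {z : Fin (p + q)} : z ∉ intSet p q ↔ z ∈ extSet p q := Nat.not_le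

theorem mem_extList {z : Fin (p + q)} : z ∈ extList p q ↔ z ∈ extSet p q := by
  simp only [extList, List.mem_take_iff_getElem, List.getElem_finRange, List.length_finRange]
  exact ⟨fun ⟨i, hi, hiz⟩ => hiz ▸ (lt_min_iff.1 hi).1, fun hz => ⟨z, lt_min hz z.2, rfl⟩⟩

theorem mem_intList {z : Fin (p + q)} : z ∈ intList p q ↔ z ∈ intSet p q := by
  simp only [intList, List.mem_drop_iff_getElem, List.getElem_finRange, List.length_finRange]
  exact ⟨fun ⟨i, _, hiz⟩ => hiz ▸ Nat.le_add_right p i, fun hz => ⟨z - p, by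
    have : p ≤ z := hz
    lia, Fin.ext (Nat.add_sub_cancel' hz)⟩⟩

theorem extSet_eq : extSet p q = {z | z ∈ extList p q} := Set.ext fun _ => mem_extList.symm

theorem intSet_eq : intSet p q = {z | z ∈ intList p q} := Set.ext fun _ => mem_intList.symm

theorem extList_append_intList : extList p q ++ intList p q = List.finRange (p + q) :=
  List.take_append_drop _ _

theorem nodup_extList_append_intList : (extList p q ++ intList p q).Nodup :=
  extList_append_intList ▸ List.nodup_finRange _

theorem disjoint_extList_intList : List.Disjoint (extList p q) (intList p q) :=
  List.disjoint_of_nodup_append nodup_extList_append_intList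

theorem notMem_extList {z : Fin (p + q)} : z ∉ extList p q ↔ z ∈ intList p q := by
  rw [mem_extList, mem_intList, notMem_extSet]

theorem length_extList : (extList p q).length = p := by
  simp [extList]

theorem length_intList : (intList p q).length = q := by
  simp [intList]

theorem exists_isCircle_mem (z : Fin (p + q)) : ∃ L, IsCircle p q L ∧ z ∈ L := by
  by_cases hz : z ∈ extList p q
  · exact ⟨_, .inl rfl, hz⟩
  · exact ⟨_, .inr rfl, notMem_extList.1 hz⟩

theorem IsCircle.pairwise_lt {L : List (Fin (p + q))} (hL : IsCircle p q L) :
    L.Pairwise (· < ·) := by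
  obtain rfl | rfl := hL
  exacts [(List.pairwise_lt_finRange _).take, (List.pairwise_lt_finRange _).drop]

theorem IsCircle.eqOn_gammaAnn {L : List (Fin (p + q))} (hL : IsCircle p q L) :
    Set.EqOn (gammaAnn p q) L.formPerm {z | z ∈ L} := by
  intro z hz
  rw [gammaAnn, gammaExt_eq, gammaInt_eq, Equiv.Perm.mul_apply]
  obtain rfl | rfl := hL
  · rw [List.formPerm_apply_of_notMem (disjoint_extList_intList hz)]
  · rw [List.formPerm_apply_of_notMem]
    exact fun h => disjoint_extList_intList h (List.formPerm_apply_mem_of_mem hz)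

theorem IsCircle.mapsTo_gammaAnn {L : List (Fin (p + q))} (hL : IsCircle p q L) :
    Set.MapsTo (gammaAnn p q) {z | z ∈ L} {z | z ∈ L} := fun z hz => by
  rw [hL.eqOn_gammaAnn hz]
  exact List.formPerm_apply_mem_of_mem hz

theorem IsCircle.mapsCyc4_gammaAnn_iff {L : List (Fin (p + q))} (hL : IsCircle p q L)
    {a b c d : Fin (p + q)} (h : ∀ z ∈ [a, b, c, d], z ∈ L) :
    MapsCyc4 (gammaAnn p q) {a, b, c, d} a b c d ↔ MapsCyc4 L.formPerm {a, b, c, d} a b c d := by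
  have hcongr {z} (hz : z ∈ ({a, b, c, d} : Set _)) :=
    induced_congr _ hL.eqOn_gammaAnn hL.mapsTo_gammaAnn (h z (by simpa using hz)) hz
  simp [MapsCyc4, hcongr]

theorem ac1_iff {τ : Equiv.Perm (Fin (p + q))} :
    AC1 p q τ ↔ HasCrossing (Equiv.Perm.SameCycle.setoid τ) (extSet p q) ∨
      HasCrossing (Equiv.Perm.SameCycle.setoid τ) (intSet p q) := by
  suffices AC1 p q τ ↔ ∃ L, IsCircle p q L ∧
      HasCrossing (Equiv.Perm.SameCycle.setoid τ) {z | z ∈ L} by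
    simpa [IsCircle, or_and_right, exists_or, extSet_eq, intSet_eq] using this
  constructor
  · rintro ⟨a, b, c, d, hnd, hcyc, hswap⟩
    obtain ⟨L, hL, haL⟩ := exists_isCircle_mem a
    have hmem : ∀ z ∈ [a, b, c, d], z ∈ L := by
      obtain ⟨ha, hb, hc, -⟩ := id hcyc
      have hbL := ha ▸ induced_mem_of_mapsTo hL.mapsTo_gammaAnn haL
      have hcL := hb ▸ induced_mem_of_mapsTo hL.mapsTo_gammaAnn hbL
      have hdL := hc ▸ induced_mem_of_mapsTo hL.mapsTo_gammaAnn hcL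
      simpa using ⟨haL, hbL, hcL, hdL⟩
    exact ⟨L, hL, (exists_mapsCyc4_formPerm_crosses_iff hL.pairwise_lt).1
      ⟨a, b, c, d, hnd, hmem, (hL.mapsCyc4_gammaAnn_iff hmem).1 hcyc,
        (mapsSwap2_iff_crosses hnd).1 hswap⟩⟩
  · rintro ⟨L, hL, hcross⟩
    obtain ⟨a, b, c, d, hnd, hmem, hcyc, hs⟩ :=
      (exists_mapsCyc4_formPerm_crosses_iff hL.pairwise_lt).2 hcross
    exact ⟨a, b, c, d, hnd, (hL.mapsCyc4_gammaAnn_iff hmem).2 hcyc,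
      (mapsSwap2_iff_crosses hnd).2 hs⟩

end Annulus

section Standard

variable {p q : ℕ} {τ : Equiv.Perm (Fin (p + q))} {L : List (Fin (p + q))}
  {A T : Set (Fin (p + q))}

theorem AnnStandard.induced_eq (hτ : AnnStandard p q τ) (hL : IsCircle p q L) (hA : IsOrbit τ A)
    (hTA : T ⊆ A) (hTL : ∀ z ∈ T, z ∈ L) {b : Fin (p + q)} (hb : b ∈ T) :
    induced τ T b = induced L.formPerm T b := by
  have hstd : Set.EqOn (induced τ (A ∩ {z | z ∈ L})) (induced L.formPerm (A ∩ {z | z ∈ L}))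
      (A ∩ {z | z ∈ L}) := by
    obtain rfl | rfl := hL
    · exact extSet_eq ▸ (hτ.1 A hA).1
    · exact intSet_eq ▸ (hτ.1 A hA).2
  exact eqOn_induced_of_subset τ (Set.subset_inter hTA hTL) hstd hb

theorem sameCycle_formPerm_finRange {n : ℕ} (i j : Fin n) :
    (List.finRange n).formPerm.SameCycle i j :=
  (List.nodup_finRange n).isCycleOn_formPerm.2 (List.mem_finRange i) (List.mem_finRange j)

theorem IsCircle.induced_formPerm_finRange (hL : IsCircle p q L) (hT : ∀ z ∈ T, z ∈ L)
    {b : Fin (p + q)} (hb : b ∈ T) :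
    induced (List.finRange (p + q)).formPerm T b = induced L.formPerm T b := by
  rw [← extList_append_intList]
  obtain rfl | rfl := hL
  · exact induced_formPerm_append_left nodup_extList_append_intList
      (fun z hz hzT => disjoint_extList_intList (hT z hzT) hz) hb
  · exact induced_formPerm_append_right nodup_extList_append_intList
      (fun z hz hzT => disjoint_extList_intList hz (hT z hzT)) hb

theorem isOrbit_classwiseInduced_iff {n : ℕ} {s : Setoid (Fin n)} {A : Set (Fin n)} :
    IsOrbit (classwiseInduced (List.finRange n).formPerm s) A ↔ ∃ i, A = {j | s i j} := by
  simp only [IsOrbit,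
    sameCycle_classwiseInduced_iff fun i j _ => sameCycle_formPerm_finRange i j]

theorem annStandard_classwiseInduced (s : Setoid (Fin (p + q))) :
    AnnStandard p q (classwiseInduced (List.finRange (p + q)).formPerm s) := by
  set σ := (List.finRange (p + q)).formPerm with hσ
  have hcircle (i) {L} (hL : IsCircle p q L) : ∀ b ∈ {j | s i j} ∩ {z | z ∈ L},
      induced (classwiseInduced σ s) ({j | s i j} ∩ {z | z ∈ L}) b =
        induced L.formPerm ({j | s i j} ∩ {z | z ∈ L}) b := fun b hb => by
    rw [induced_classwiseInduced σ (fun z hz => s.trans (s.symm hb.1) hz.1) hb,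
      hL.induced_formPerm_finRange (fun z hz => hz.2) hb]
  have hexit (i) {L M : List (Fin (p + q))} (hLM : (L ++ M).Nodup) (hσLM : σ = (L ++ M).formPerm)
      (hL : ({j | s i j} ∩ {z | z ∈ L}).Nonempty) (hM : ({j | s i j} ∩ {z | z ∈ M}).Nonempty) :
      ∃! a, a ∈ {j | s i j} ∩ {z | z ∈ L} ∧ classwiseInduced σ s a ∈ {z | z ∈ M} := by
    refine (existsUnique_congr fun a => and_congr_right fun ha => ?_).1
      (existsUnique_induced_formPerm_append_mem hLM (hL.imp fun _ h => h.symm)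
        (hM.imp fun _ h => h.symm))
    rw [classwiseInduced_apply σ ha.1, hσLM]
    exact Iff.rfl
  have hrot : (extList p q ++ intList p q) ~r (intList p q ++ extList p q) := List.isRotated_append
  have hσ₁ : σ = (extList p q ++ intList p q).formPerm := by rw [extList_append_intList]
  have hσ₂ : σ = (intList p q ++ extList p q).formPerm :=
    hσ₁.trans (List.formPerm_eq_of_isRotated nodup_extList_append_intList hrot)
  simp only [AnnStandard, hσ, isOrbit_classwiseInduced_iff, extSet_eq, intSet_eq, gammaExt_eq,
    gammaInt_eq, forall_exists_index, forall_eq_apply_imp_iff]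
  exact ⟨fun i => ⟨hcircle i (.inl rfl), hcircle i (.inr rfl)⟩, fun i hL hM =>
    ⟨hexit i nodup_extList_append_intList hσ₁ hL hM,
      hexit i (hrot.nodup_iff.1 nodup_extList_append_intList) hσ₂ hM hL⟩⟩

end Standard

section Lambda

variable {p q : ℕ} {L : List (Fin (p + q))} {x y : Fin (p + q)} {T : Set (Fin (p + q))}

theorem IsCircle.exists_lamPerm_eq (hL : IsCircle p q L) (hx : x ∈ extSet p q)
    (hy : y ∈ intSet p q) :
    ∃ w l m, (w = x ∨ w = y) ∧ L ~r (w :: l) ∧ (l ++ m).Nodup ∧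
      (∀ z ∈ m, z ∉ L) ∧ (∀ z, z ∉ L → z ≠ x → z ≠ y → z ∈ m) ∧
      lamPerm p q x y = (l ++ m).formPerm := by
  have hnd := nodup_extList_append_intList (p := p) (q := q)
  have hext := isRotated_cons_map_formPerm_pow hnd.of_append_left (mem_extList.2 hx)
  have hint := isRotated_cons_map_formPerm_pow hnd.of_append_right (mem_intList.2 hy)
  have hlam : lamPerm p q x y = (_ ++ _ : List _).formPerm := rfl
  rw [← gammaExt_eq, length_extList] at hext
  rw [← gammaInt_eq, length_intList] at hint
  generalize (List.range (p - 1)).map _ = l at hext hlam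
  generalize (List.range (q - 1)).map _ = m at hint hlam
  have hnd' := (hext.perm.append hint.perm).nodup_iff.1 hnd
  have hlm : (l ++ m).Nodup := by grind
  have hl (z) : z ∈ extList p q ↔ z = x ∨ z ∈ l := by simpa using hext.mem_iff
  have hm (z) : z ∈ intList p q ↔ z = y ∨ z ∈ m := by simpa using hint.mem_iff
  have hnot (z) : z ∉ extList p q ↔ z ∈ intList p q := notMem_extList
  obtain rfl | rfl := hL
  · exact ⟨x, l, m, .inl rfl, hext, hlm, by grind, by grind, hlam⟩
  · exact ⟨y, m, l, .inr rfl, hint, List.nodup_append_comm.1 hlm, by grind, by grind,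
      hlam.trans (List.formPerm_eq_of_isRotated hlm List.isRotated_append)⟩

theorem IsCircle.induced_lamPerm (hL : IsCircle p q L) (hx : x ∈ extSet p q)
    (hy : y ∈ intSet p q) (hxT : x ∉ T) (hyT : y ∉ T) (hT : ∀ z ∈ T, z ∈ L) {b : Fin (p + q)}
    (hb : b ∈ T) : induced (lamPerm p q x y) T b = induced L.formPerm T b := by
  obtain ⟨w, l, m, hw, hrot, hnd, hml, -, hlam⟩ := hL.exists_lamPerm_eq hx hy
  have hLnd : L.Nodup := hL.pairwise_lt.imp ne_of_lt
  have hwT : ∀ z ∈ [w], z ∉ T := by grind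
  rw [hlam, induced_formPerm_append_left hnd (fun z hz hzT => hml z hz (hT z hzT)) hb,
    List.formPerm_eq_of_isRotated hLnd hrot]
  exact (induced_formPerm_append_right (l := [w]) (hrot.nodup_iff.1 hLnd) hwT hb).symm

theorem IsCircle.eq_of_induced_lamPerm_notMem (hL : IsCircle p q L) (hx : x ∈ extSet p q)
    (hy : y ∈ intSet p q) (hxT : x ∉ T) (hyT : y ∉ T) {a b : Fin (p + q)} (ha : a ∈ T)
    (haL : a ∈ L) (ha' : induced (lamPerm p q x y) T a ∉ L) (hb : b ∈ T) (hbL : b ∈ L)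
    (hb' : induced (lamPerm p q x y) T b ∉ L) : a = b := by
  obtain ⟨w, l, m, hw, hrot, hnd, -, hlm, hlam⟩ := hL.exists_lamPerm_eq hx hy
  have hmem_l {z} (hz : z ∈ T) (hzL : z ∈ L) : z ∈ l := by
    have := hrot.mem_iff.1 hzL
    grind
  have hmem_m {z} (hz : z ∈ T) (hzL : z ∉ L) : z ∈ m :=
    hlm z hzL (ne_of_mem_of_not_mem hz hxT) (ne_of_mem_of_not_mem hz hyT)
  have haT := induced_mem (lamPerm p q x y) ha
  have hbT := induced_mem (lamPerm p q x y) hb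
  have hexit := existsUnique_induced_formPerm_append_mem (S := T) hnd ⟨a, hmem_l ha haL, ha⟩
    ⟨_, hmem_m haT ha', haT⟩
  rw [← hlam] at hexit
  exact hexit.unique ⟨⟨ha, hmem_l ha haL⟩, hmem_m haT ha'⟩ ⟨⟨hb, hmem_l hb hbL⟩, hmem_m hbT hb'⟩

end Lambda

section OneConnectingClass

variable {p q : ℕ} {s : Setoid (Fin (p + q))} {τ : Equiv.Perm (Fin (p + q))}

/-- At most one class of `s` is `(p, q)`-connecting. -/
def AtMostOneConnecting (p q : ℕ) (s : Setoid (Fin (p + q))) : Prop :=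
  {B ∈ s.classes | ConnectingBlock p q B}.Subsingleton

theorem IsCircle.eq_or_disjoint {L M : List (Fin (p + q))} (hL : IsCircle p q L)
    (hM : IsCircle p q M) : L = M ∨ L.Disjoint M := by
  obtain rfl | rfl := hL <;> obtain rfl | rfl := hM
  exacts [.inl rfl, .inr disjoint_extList_intList, .inr disjoint_extList_intList.symm, .inl rfl]

theorem AtMostOneConnecting.exists_isCircle (h : AtMostOneConnecting p q s)
    {a x y : Fin (p + q)} (hx : x ∈ extSet p q) (hy : y ∈ intSet p q) (hxy : s x y)
    (hxa : ¬ s x a) : ∃ L, IsCircle p q L ∧ ∀ z, s a z → z ∈ L := by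
  have hnot : ¬ ConnectingBlock p q {z | s z a} := fun ha => hxa <| by
    have heq := h ⟨s.mem_classes x, ⟨x, s.refl x, hx⟩, y, s.symm hxy, hy⟩ ⟨s.mem_classes a, ha⟩
    exact heq.subset (s.refl x)
  by_cases hint : ({z | s z a} ∩ intSet p q).Nonempty
  · exact ⟨_, .inr rfl, fun z hz => mem_intList.2 <| notMem_extSet.1 fun hzE =>
      hnot ⟨⟨z, s.symm hz, hzE⟩, hint⟩⟩
  · exact ⟨_, .inl rfl, fun z hz => mem_extList.2 <| notMem_intSet.1 fun hzE =>
      hint ⟨z, s.symm hz, hzE⟩⟩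

theorem AtMostOneConnecting.exists_isCircle_of_mapsSwap
    (h : AtMostOneConnecting p q (Equiv.Perm.SameCycle.setoid τ)) {S : Set (Fin (p + q))}
    {x y z : Fin (p + q)} (hx : x ∈ extSet p q) (hy : y ∈ intSet p q) (hxy : MapsSwap τ S x y)
    (hz : z ∈ S) (hzx : z ≠ x) (hzy : z ≠ y) :
    ∃ L, IsCircle p q L ∧ ∀ w, τ.SameCycle z w → w ∈ L :=
  h.exists_isCircle hx hy (hxy.1 ▸ sameCycle_induced τ x) (hxy.not_sameCycle hz hzx hzy)

theorem AtMostOneConnecting.not_ac2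
    (h : AtMostOneConnecting p q (Equiv.Perm.SameCycle.setoid τ)) (hτ : AnnStandard p q τ) :
    ¬ AC2 p q τ := by
  rintro ⟨a, b, c, x, y, hnd, hx, hy, ⟨hab, -, -⟩, ⟨hac, hcb, -⟩, hxy⟩
  obtain ⟨L, hL, hLa⟩ := h.exists_isCircle_of_mapsSwap hx hy hxy (z := a) (by simp) (by grind)
    (by grind)
  have hc : τ.SameCycle a c := hac ▸ sameCycle_induced τ a
  have hb : τ.SameCycle a b := hc.trans (hcb ▸ sameCycle_induced τ c)
  have hT : {a, b, c} ⊆ {z | τ.SameCycle a z} := by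
    rintro _ (rfl | rfl | rfl)
    exacts [.refl _ _, hb, hc]
  have hTL : ∀ z ∈ ({a, b, c} : Set _), z ∈ L := fun z hz => hLa z (hT hz)
  have hbc : b = c := calc
    b = induced (lamPerm p q x y) {a, b, c} a := hab.symm
    _ = induced L.formPerm {a, b, c} a :=
      hL.induced_lamPerm hx hy (by grind) (by grind) hTL (by simp)
    _ = induced τ {a, b, c} a := (hτ.induced_eq hL ⟨a, rfl⟩ hT hTL (by simp)).symm
    _ = induced τ {a, b, c, x, y} a :=
      induced_eq_of_induced_mem τ (by grind) (by simp) (by simp [hac])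
    _ = c := hac
  grind

theorem AtMostOneConnecting.ac1_of_ac3
    (h : AtMostOneConnecting p q (Equiv.Perm.SameCycle.setoid τ)) (hτ : AC3 p q τ) :
    AC1 p q τ := by
  obtain ⟨a, b, c, d, x, y, hnd, hx, hy, hlam, hswap, hxy⟩ := hτ
  have hnd' : [a, b, c, d].Nodup := by grind
  obtain ⟨L, hL, hLa⟩ := h.exists_isCircle_of_mapsSwap hx hy hxy (z := a) (by simp) (by grind)
    (by grind)
  obtain ⟨M, hM, hMb⟩ := h.exists_isCircle_of_mapsSwap hx hy hxy (z := b) (by simp) (by grind)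
    (by grind)
  have haL := hLa a (.refl τ a)
  have hcL := hLa c (hswap.1 ▸ sameCycle_induced τ a)
  have hbM := hMb b (.refl τ b)
  have hdM := hMb d (hswap.2.2.1 ▸ sameCycle_induced τ b)
  obtain ⟨hab, -, hcd, -⟩ := id hlam
  obtain rfl | hLM := hL.eq_or_disjoint hM
  · have hmem : ∀ z ∈ [a, b, c, d], z ∈ L := by grind
    have hlamL {z} (hz : z ∈ ({a, b, c, d} : Set _)) :=
      hL.induced_lamPerm (T := {a, b, c, d}) hx hy (by grind) (by grind) (by grind) hz
    refine ⟨a, b, c, d, hnd', (hL.mapsCyc4_gammaAnn_iff hmem).2 ?_,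
      hswap.of_superset (by grind) (by simp)⟩
    simpa [MapsCyc4, hlamL] using hlam
  · have : a = c := hL.eq_of_induced_lamPerm_notMem (T := {a, b, c, d}) hx hy (by grind)
      (by grind) (by simp) haL (fun hbL => hLM hbL (hab.symm ▸ hbM))
      (by simp) hcL (fun hdL => hLM hdL (hcd.symm ▸ hdM))
    grind

theorem AtMostOneConnecting.annNC_iff
    (h : AtMostOneConnecting p q (Equiv.Perm.SameCycle.setoid τ)) :
    AnnNC p q τ ↔ AnnStandard p q τ ∧ ¬ AC1 p q τ :=
  ⟨fun hτ => ⟨hτ.1, hτ.2.1⟩, fun hτ => ⟨hτ.1, hτ.2, h.not_ac2 hτ.1, mt h.ac1_of_ac3 hτ.2⟩⟩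

theorem AtMostOneConnecting.exists_annNC_iff (h : AtMostOneConnecting p q s) :
    (∃ τ, AnnNC p q τ ∧ Equiv.Perm.SameCycle.setoid τ = s) ↔
      ¬ HasCrossing s (extSet p q) ∧ ¬ HasCrossing s (intSet p q) := by
  rw [← not_or]
  constructor
  · rintro ⟨τ, hτ, rfl⟩
    exact fun hcross => hτ.2.1 (ac1_iff.2 hcross)
  · intro hcross
    have hs : Equiv.Perm.SameCycle.setoid (classwiseInduced (List.finRange (p + q)).formPerm s) =
        s := Setoid.ext fun i j =>
      sameCycle_classwiseInduced_iff fun i j _ => sameCycle_formPerm_finRange i j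
    rw [← hs] at h hcross
    exact ⟨_, h.annNC_iff.2 ⟨annStandard_classwiseInduced s, mt ac1_iff.1 hcross⟩, hs⟩

end OneConnectingClass

section Partition

theorem setOf_isOrbit {α : Type*} (τ : Equiv.Perm α) :
    {A | IsOrbit τ A} = (Equiv.Perm.SameCycle.setoid τ).classes :=
  Set.ext fun _ => exists_congr fun a => by
    rw [show {b | τ.SameCycle a b} = {b | τ.SameCycle b a} from
      Set.ext fun _ => Equiv.Perm.sameCycle_comm]
    exact Iff.rfl

theorem noCrossing_insert_iff {n : ℕ} {s : Setoid (Fin n)} {E B₀ : Set (Fin n)}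
    (hB₀ : B₀ ∈ s.classes) (hE : ∀ B ∈ s.classes, (B ∩ E).Nonempty → B ⊆ E ∨ B = B₀) :
    NoCrossing (insert (B₀ ∩ E) {B | B ∈ s.classes ∧ B ⊆ E}) ↔ ¬ HasCrossing s E := by
  have htrace : ∀ B ∈ insert (B₀ ∩ E) {B | B ∈ s.classes ∧ B ⊆ E},
      ∃ C ∈ s.classes, B = C ∩ E := by
    rintro B (rfl | ⟨hB, hBE⟩)
    exacts [⟨B₀, hB₀, rfl⟩, ⟨B, hB, (Set.inter_eq_left.2 hBE).symm⟩]
  have hmem {i} (hi : i ∈ E) :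
      {z | s z i} ∩ E ∈ insert (B₀ ∩ E) {B | B ∈ s.classes ∧ B ⊆ E} := by
    obtain hsub | heq := hE _ (s.mem_classes i) ⟨i, s.refl i, hi⟩
    · exact .inr (by rw [Set.inter_eq_left.2 hsub]; exact ⟨s.mem_classes i, hsub⟩)
    · exact .inl (by rw [heq])
  refine not_congr ⟨?_, ?_⟩
  · rintro ⟨a, b, c, d, B, C, hB, hC, hne, hab, hbc, hcd, ha, hc, hb, hd⟩
    obtain ⟨B, hBs, rfl⟩ := htrace B hB
    obtain ⟨C, hCs, rfl⟩ := htrace C hC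
    refine ⟨a, b, c, d, ha.2, hb.2, hc.2, hd.2, hab, hbc, hcd,
      s.rel_iff_exists_classes.2 ⟨B, hBs, ha.1, hc.1⟩,
      s.rel_iff_exists_classes.2 ⟨C, hCs, hb.1, hd.1⟩, fun hs => hne ?_⟩
    obtain ⟨D, hD, haD, hbD⟩ := s.rel_iff_exists_classes.1 hs
    rw [Setoid.eq_of_mem_classes hBs ha.1 hD haD, Setoid.eq_of_mem_classes hCs hb.1 hD hbD]
  · rintro ⟨a, b, c, d, ha, hb, hc, hd, hab, hbc, hcd, hac, hbd, hnot⟩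
    refine ⟨a, b, c, d, _, _, hmem ha, hmem hb, fun heq => hnot ?_, hab, hbc, hcd,
      ⟨s.refl a, ha⟩, ⟨s.symm hac, hc⟩, ⟨s.refl b, hb⟩, ⟨s.symm hbd, hd⟩⟩
    exact (heq ▸ ⟨s.refl a, ha⟩ : a ∈ {z | s z b} ∩ E).1

end Partition

theorem stmt_9_general (p q : ℕ) (π : Set (Set (Fin (p + q)))) (hpart : Setoid.IsPartition π)
    (B₀ : Set (Fin (p + q))) (hB₀ : B₀ ∈ π) (huniq : ∀ B ∈ π, ConnectingBlock p q B → B = B₀) :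
    (∃ τ : Equiv.Perm (Fin (p + q)), AnnNC p q τ ∧ {A | IsOrbit τ A} = π) ↔
      NoCrossing (insert (B₀ ∩ extSet p q) {B | B ∈ π ∧ B ⊆ extSet p q}) ∧
      NoCrossing (insert (B₀ ∩ intSet p q) {B | B ∈ π ∧ B ⊆ intSet p q}) := by
  obtain ⟨s, rfl⟩ : ∃ s : Setoid (Fin (p + q)), s.classes = π :=
    ⟨_, Setoid.classes_mkClasses π hpart⟩
  have hone : AtMostOneConnecting p q s :=
    fun B hB C hC => (huniq B hB.1 hB.2).trans (huniq C hC.1 hC.2).symm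
  have hext : ∀ B ∈ s.classes, (B ∩ extSet p q).Nonempty → B ⊆ extSet p q ∨ B = B₀ :=
    fun B hB hBE => or_iff_not_imp_left.2 fun hsub => by
      obtain ⟨z, hz, hzE⟩ := Set.not_subset.1 hsub
      exact huniq B hB ⟨hBE, z, hz, notMem_extSet.1 hzE⟩
  have hint : ∀ B ∈ s.classes, (B ∩ intSet p q).Nonempty → B ⊆ intSet p q ∨ B = B₀ :=
    fun B hB hBE => or_iff_not_imp_left.2 fun hsub => by
      obtain ⟨z, hz, hzE⟩ := Set.not_subset.1 hsub
      exact huniq B hB ⟨⟨z, hz, notMem_intSet.1 hzE⟩, hBE⟩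
  rw [noCrossing_insert_iff hB₀ hext, noCrossing_insert_iff hB₀ hint, ← hone.exists_annNC_iff]
  simp only [setOf_isOrbit, Setoid.classes_inj]

/-- Proposition 4.6 2°: let `π` be a partition of `[p+q]` with exactly one
`(p,q)`-connecting block `B₀`; write `B₀' = B₀ ∩ {1,…,p}`, `B₀'' = B₀ ∩ {p+1,…,p+q}`, and
let the remaining blocks of `π` be contained in `{1,…,p}` or in `{p+1,…,p+q}`.  Then
`π ∈ NC_ann(p,q)` iff the partition `{B₀', B₁', …, B_s'}` of `{1,…,p}` is disc
non-crossing and the partition `{B₀'', B₁'', …, B_t''}` of `{p+1,…,p+q}` is disc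
non-crossing. -/
theorem stmt_9 (p q : ℕ) (hp : 0 < p) (hq : 0 < q) (π : Set (Set (Fin (p + q))))
    (hpart : Setoid.IsPartition π) (B₀ : Set (Fin (p + q))) (hB₀ : B₀ ∈ π)
    (hconn : ConnectingBlock p q B₀)
    (huniq : ∀ B ∈ π, ConnectingBlock p q B → B = B₀) :
    (∃ τ : Equiv.Perm (Fin (p + q)), AnnNC p q τ ∧ {A | IsOrbit τ A} = π) ↔
      NoCrossing (insert (B₀ ∩ extSet p q) {B | B ∈ π ∧ B ⊆ extSet p q}) ∧
      NoCrossing (insert (B₀ ∩ intSet p q) {B | B ∈ π ∧ B ⊆ intSet p q}) :=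
  stmt_9_general p q π hpart B₀ hB₀ huniq
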